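/- arXiv:1909.08835 — 5 statements merged into one kernel-verified Lean document; each statement's English description precedes it below -/
import Mathlib

section
/- Let {φ_i}_{i∈I} and {ψ_i}_{i∈I} be two frames for a separable Hilbert space H. Then the following are equivalent: (i) the two frames are woven (there exist universal constants 0 < A ≤ B such that every weaving {φ_i}_{i∈J} ∪ {ψ_i}_{i∈J^c}, J ⊆ I, is a frame with bounds A and B); (ii) the two frames are weakly woven (for every J ⊆ I the weaving {φ_i}_{i∈J} ∪ {ψ_i}_{i∈J^c} is a frame for H, with bounds possibly depending on J). -/
/-!
A weaving has upper bound the sum of the two given upper bounds, so the point is a common lower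
bound. Encode the subsets `J` as points of the compact space `I → Bool`.

For fixed `f` the sum `∑ |⟪f, x i⟫|²` over the weaving `x` depends continuously on `J`, so the
weavings with lower bound `1 / (n + 1)` form a closed set. If all weavings are frames, these sets
cover `I → Bool`, and by Baire's theorem one of them contains a cylinder: some `A > 0` is a lower
bound for all weavings that follow a prescribed pattern on some finite set `F`
(`exists_cylinder_lower_bound`).

For an arbitrary weaving and a unit vector `f`, consider the coefficients of `f` against `φ i` and
`ψ i`, `i ∈ F`. If the sum of their squares is below `A / 2`, changing the pattern on `F` to the
prescribed one alters the energy by less than `A / 2`, so it was at least `A / 2`. The other `f`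
lie in a weakly compact set that avoids `0`; the energy is jointly lower semicontinuous and positive
there, so it has a positive minimum over all such `f` and all `J`
(`exists_lower_bound_of_le_sum`).
-/

open scoped ComplexInnerProductSpace

noncomputable section

variable {H : Type*} [NormedAddCommGroup H] [InnerProductSpace ℂ H] [CompleteSpace H]
variable {I : Type*} [Countable I]

/-- `φ` is a Bessel sequence with Bessel bound `B`. -/
def IsBesselWith (φ : I → H) (B : ℝ) : Prop :=
  ∀ f : H, Summable (fun i => ‖⟪f, φ i⟫‖ ^ 2) ∧
    ∑' i, ‖⟪f, φ i⟫‖ ^ 2 ≤ B * ‖f‖ ^ 2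

/-- `φ` is a frame with frame bounds `A ≤ B`. -/
def IsFrameWith (φ : I → H) (A B : ℝ) : Prop :=
  0 < A ∧ A ≤ B ∧ ∀ f : H, Summable (fun i => ‖⟪f, φ i⟫‖ ^ 2) ∧
    A * ‖f‖ ^ 2 ≤ ∑' i, ‖⟪f, φ i⟫‖ ^ 2 ∧ ∑' i, ‖⟪f, φ i⟫‖ ^ 2 ≤ B * ‖f‖ ^ 2

/-- `φ` is a frame (for some choice of bounds). -/
def IsFrame (φ : I → H) : Prop := ∃ A B : ℝ, IsFrameWith φ A B

open Classical in
/-- The weaving of the families `φ` and `ψ` along the subset `J`: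
it takes `φ i` for `i ∈ J` and `ψ i` for `i ∈ Jᶜ`. -/
def weaving (φ ψ : I → H) (J : Set I) : I → H := fun i => if i ∈ J then φ i else ψ i

/-- Two families are woven if there are universal frame bounds valid for all weavings. -/
def Woven (φ ψ : I → H) : Prop :=
  ∃ A B : ℝ, ∀ J : Set I, IsFrameWith (weaving φ ψ J) A B

/-- The sum `∑ |⟪f, x i⟫|²` for the weaving `x` which takes `φ i` where `b i` is true and `ψ i`
elsewhere. Subsets of the index set are encoded as points of the compact space `ι → Bool`. -/
def weaveEnergy {E ι : Type*} [NormedAddCommGroup E] [InnerProductSpace ℂ E]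
    (φ ψ : ι → E) (b : ι → Bool) (f : E) : ℝ :=
  ∑' i, ‖⟪f, cond (b i) (φ i) (ψ i)⟫‖ ^ 2

section Weavings

variable {E ι : Type*} [NormedAddCommGroup E] [InnerProductSpace ℂ E] {φ ψ : ι → E}

lemma norm_inner_cond_sq_le (b : Bool) (f x y : E) :
    ‖⟪f, cond b x y⟫‖ ^ 2 ≤ ‖⟪f, x⟫‖ ^ 2 + ‖⟪f, y⟫‖ ^ 2 := by
  cases b
  · simp
  · simp

lemma summable_weave (hφ : ∀ f : E, Summable fun i => ‖⟪f, φ i⟫‖ ^ 2)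
    (hψ : ∀ f : E, Summable fun i => ‖⟪f, ψ i⟫‖ ^ 2) (b : ι → Bool) (f : E) :
    Summable fun i => ‖⟪f, cond (b i) (φ i) (ψ i)⟫‖ ^ 2 :=
  Summable.of_nonneg_of_le (fun _ => sq_nonneg _) (fun _ => norm_inner_cond_sq_le _ _ _ _)
    ((hφ f).add (hψ f))

lemma weaveEnergy_smul (b : ι → Bool) (c : ℂ) (f : E) :
    weaveEnergy φ ψ b (c • f) = ‖c‖ ^ 2 * weaveEnergy φ ψ b f := by
  unfold weaveEnergy
  rw [← tsum_mul_left]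
  refine tsum_congr fun i => ?_
  rw [inner_smul_left, norm_mul, RCLike.norm_conj, mul_pow]

lemma continuous_weaveEnergy (hφ : ∀ f : E, Summable fun i => ‖⟪f, φ i⟫‖ ^ 2)
    (hψ : ∀ f : E, Summable fun i => ‖⟪f, ψ i⟫‖ ^ 2) (f : E) :
    Continuous fun b : ι → Bool => weaveEnergy φ ψ b f := by
  refine continuous_tsum (fun i => ?_) ((hφ f).add (hψ f)) (fun i b => ?_)
  · exact (continuous_of_discreteTopology
      (f := fun t : Bool => ‖⟪f, cond t (φ i) (ψ i)⟫‖ ^ 2)).comp (continuous_apply i)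
  · rw [Real.norm_of_nonneg (sq_nonneg _)]
    exact norm_inner_cond_sq_le _ _ _ _

/-- Baire category on `ι → Bool`: the sets of weavings with lower bound `1 / (n + 1)` are closed
and cover, so one of them contains a cylinder. Thus any weaving acquires the lower bound `A` once
its values on the finite set `F` are replaced by those of `b₀`. -/
lemma exists_cylinder_lower_bound (hφ : ∀ f : E, Summable fun i => ‖⟪f, φ i⟫‖ ^ 2)
    (hψ : ∀ f : E, Summable fun i => ‖⟪f, ψ i⟫‖ ^ 2)
    (h : ∀ b : ι → Bool, ∃ A : ℝ, 0 < A ∧ ∀ f : E, A * ‖f‖ ^ 2 ≤ weaveEnergy φ ψ b f) :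
    ∃ (A : ℝ) (F : Finset ι) (b₀ : ι → Bool), 0 < A ∧ ∀ b : ι → Bool,
      (∀ i ∈ F, b i = b₀ i) → ∀ f : E, A * ‖f‖ ^ 2 ≤ weaveEnergy φ ψ b f := by
  let S : ℕ → Set (ι → Bool) := fun n =>
    {b | ∀ f : E, (1 / ((n : ℝ) + 1)) * ‖f‖ ^ 2 ≤ weaveEnergy φ ψ b f}
  have hclosed : ∀ n, IsClosed (S n) := fun n => by
    simp only [S, Set.ofPred_forall]
    exact isClosed_iInter fun f =>
      isClosed_le continuous_const (continuous_weaveEnergy hφ hψ f)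
  have hcover : ⋃ n, S n = Set.univ := by
    refine Set.eq_univ_of_forall fun b => ?_
    obtain ⟨A, hA, hb⟩ := h b
    obtain ⟨n, hn⟩ := exists_nat_one_div_lt hA
    exact Set.mem_iUnion.2 ⟨n, fun f => le_trans (by gcongr) (hb f)⟩
  obtain ⟨n, b₀, hb₀⟩ := nonempty_interior_of_iUnion_of_closed hclosed hcover
  obtain ⟨F, u, hu, hsub⟩ := isOpen_pi_iff.1 isOpen_interior b₀ hb₀
  refine ⟨1 / ((n : ℝ) + 1), F, b₀, by positivity, fun b hb => ?_⟩
  refine interior_subset (hsub fun i hi => ?_)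
  rw [hb i hi]
  exact (hu i hi).2

/-- Changing a weaving on a finite set `F` costs at most the coefficients supported on `F`. -/
lemma weaveEnergy_le_add_sum (hφ : ∀ f : E, Summable fun i => ‖⟪f, φ i⟫‖ ^ 2)
    (hψ : ∀ f : E, Summable fun i => ‖⟪f, ψ i⟫‖ ^ 2) (F : Finset ι) (b b₁ : ι → Bool)
    (hb : ∀ i ∉ F, b₁ i = b i) (f : E) :
    weaveEnergy φ ψ b₁ f ≤
      weaveEnergy φ ψ b f + ∑ i ∈ F, (‖⟪f, φ i⟫‖ ^ 2 + ‖⟪f, ψ i⟫‖ ^ 2) := by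
  have h1 := summable_weave hφ hψ b f
  have h2 := summable_weave hφ hψ b₁ f
  unfold weaveEnergy
  rw [← h1.sum_add_tsum_compl (s := F), ← h2.sum_add_tsum_compl (s := F)]
  have e : ∑' i : ↥((F : Set ι)ᶜ), ‖⟪f, cond (b₁ i) (φ i) (ψ i)⟫‖ ^ 2 =
      ∑' i : ↥((F : Set ι)ᶜ), ‖⟪f, cond (b i) (φ i) (ψ i)⟫‖ ^ 2 :=
    tsum_congr fun i => by rw [hb i (fun hi => i.2 hi)]
  rw [e]
  have h3 : ∑ i ∈ F, ‖⟪f, cond (b₁ i) (φ i) (ψ i)⟫‖ ^ 2 ≤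
      ∑ i ∈ F, (‖⟪f, φ i⟫‖ ^ 2 + ‖⟪f, ψ i⟫‖ ^ 2) :=
    Finset.sum_le_sum fun i _ => norm_inner_cond_sq_le _ _ _ _
  have h4 : 0 ≤ ∑ i ∈ F, ‖⟪f, cond (b i) (φ i) (ψ i)⟫‖ ^ 2 :=
    Finset.sum_nonneg fun i _ => sq_nonneg _
  linarith

/-- Weak compactness: on unit vectors whose coefficients over the finite set `F` are not small,
the energies of all weavings are bounded below simultaneously. The energy is lower semicontinuous
in the weaving and, for the weak topology, in the vector; the vectors concerned lie in a weakly
compact set that avoids `0`, where the energy is positive. -/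
lemma exists_lower_bound_of_le_sum [CompleteSpace E]
    (hφ : ∀ f : E, Summable fun i => ‖⟪f, φ i⟫‖ ^ 2)
    (hψ : ∀ f : E, Summable fun i => ‖⟪f, ψ i⟫‖ ^ 2)
    (h : ∀ b : ι → Bool, ∀ f : E, f ≠ 0 → 0 < weaveEnergy φ ψ b f)
    (F : Finset ι) {δ : ℝ} (hδ : 0 < δ) :
    ∃ c : ℝ, 0 < c ∧ ∀ (b : ι → Bool) (f : E), ‖f‖ = 1 →
      δ ≤ ∑ i ∈ F, (‖⟪f, φ i⟫‖ ^ 2 + ‖⟪f, ψ i⟫‖ ^ 2) → c ≤ weaveEnergy φ ψ b f := by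
  -- Vectors are replaced by the functionals they represent, so that Banach–Alaoglu applies.
  let D : E → WeakDual ℂ E := fun f => StrongDual.toWeakDual (InnerProductSpace.toDual ℂ E f)
  have hD : ∀ f x, D f x = ⟪f, x⟫ := fun f x => rfl
  have hsurj : ∀ l : WeakDual ℂ E, ∃ f, D f = l := fun l =>
    ⟨(InnerProductSpace.toDual ℂ E).symm (WeakDual.toStrongDual l), by simp [D]⟩
  let Q : (ι → Bool) × WeakDual ℂ E → ENNReal := fun p =>
    ∑' i, ENNReal.ofReal (‖p.2 (cond (p.1 i) (φ i) (ψ i))‖ ^ 2)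
  have hQ : ∀ b f, Q (b, D f) = ENNReal.ofReal (weaveEnergy φ ψ b f) := fun b f =>
    (ENNReal.ofReal_tsum_of_nonneg (fun _ => sq_nonneg _) (summable_weave hφ hψ b f)).symm
  have hlsc : LowerSemicontinuous Q := by
    refine lowerSemicontinuous_tsum fun i => Continuous.lowerSemicontinuous ?_
    refine ENNReal.continuous_ofReal.comp ((Continuous.norm ?_).pow 2)
    have e : (fun p : (ι → Bool) × WeakDual ℂ E => p.2 (cond (p.1 i) (φ i) (ψ i))) =
        fun p => cond (p.1 i) (p.2 (φ i)) (p.2 (ψ i)) := by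
      funext p
      cases p.1 i <;> rfl
    rw [e]
    have hc : Continuous fun q : Bool × ℂ × ℂ => cond q.1 q.2.1 q.2.2 := by
      refine continuous_prod_of_discrete_left.2 fun t => ?_
      cases t
      · exact continuous_snd
      · exact continuous_fst
    have hb : Continuous fun p : (ι → Bool) × WeakDual ℂ E => p.1 i :=
      (continuous_apply i).comp continuous_fst
    exact hc.comp (hb.prodMk
      (((WeakDual.eval_continuous (φ i)).comp continuous_snd).prodMk
        ((WeakDual.eval_continuous (ψ i)).comp continuous_snd)))
  let L : Set (WeakDual ℂ E) :=
    {l | δ ≤ ∑ i ∈ F, (‖l (φ i)‖ ^ 2 + ‖l (ψ i)‖ ^ 2)}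
  have hL : IsClosed L := by
    refine isClosed_le continuous_const (continuous_finsetSum _ fun i _ => ?_)
    exact ((WeakDual.eval_continuous (φ i)).norm.pow 2).add
      ((WeakDual.eval_continuous (ψ i)).norm.pow 2)
  let K : Set ((ι → Bool) × WeakDual ℂ E) :=
    Set.univ ×ˢ (WeakDual.toStrongDual ⁻¹' Metric.closedBall 0 1 ∩ L)
  have hK : IsCompact K :=
    isCompact_univ.prod ((WeakDual.isCompact_closedBall 0 1).inter_right hL)
  have hmem : ∀ (b : ι → Bool) (f : E), ‖f‖ = 1 →
      δ ≤ ∑ i ∈ F, (‖⟪f, φ i⟫‖ ^ 2 + ‖⟪f, ψ i⟫‖ ^ 2) → (b, D f) ∈ K := by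
    intro b f hf hs
    refine ⟨trivial, ?_, hs⟩
    simp [D, hf]
  rcases K.eq_empty_or_nonempty with hKe | hKn
  · refine ⟨1, one_pos, fun b f hf hs => ?_⟩
    have := hmem b f hf hs
    rw [hKe] at this
    exact this.elim
  · obtain ⟨⟨b₁, l₁⟩, hK₁, hmin⟩ := (hlsc.lowerSemicontinuousOn K).exists_isMinOn hKn hK
    obtain ⟨f₁, rfl⟩ := hsurj l₁
    have hf₁ : f₁ ≠ 0 := by
      rintro rfl
      have h0 : δ ≤ ∑ i ∈ F, (‖D 0 (φ i)‖ ^ 2 + ‖D 0 (ψ i)‖ ^ 2) := hK₁.2.2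
      simp [hD] at h0
      linarith
    refine ⟨_, h b₁ f₁ hf₁, fun b f hf hs => ?_⟩
    have := hmin (hmem b f hf hs)
    simp only [Set.mem_ofPred_eq, hQ] at this
    exact (ENNReal.ofReal_le_ofReal_iff (tsum_nonneg fun _ => sq_nonneg _)).1 this

/-- If every weaving has a positive lower bound, then a common positive lower bound exists. -/
lemma exists_uniform_lower_bound [CompleteSpace E]
    (hφ : ∀ f : E, Summable fun i => ‖⟪f, φ i⟫‖ ^ 2)
    (hψ : ∀ f : E, Summable fun i => ‖⟪f, ψ i⟫‖ ^ 2)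
    (h : ∀ b : ι → Bool, ∃ A : ℝ, 0 < A ∧ ∀ f : E, A * ‖f‖ ^ 2 ≤ weaveEnergy φ ψ b f) :
    ∃ A : ℝ, 0 < A ∧ ∀ (b : ι → Bool) (f : E), A * ‖f‖ ^ 2 ≤ weaveEnergy φ ψ b f := by
  classical
  obtain ⟨A, F, b₀, hA, hcyl⟩ := exists_cylinder_lower_bound hφ hψ h
  have hpos : ∀ b : ι → Bool, ∀ f : E, f ≠ 0 → 0 < weaveEnergy φ ψ b f := fun b f hf => by
    obtain ⟨a, ha, hb⟩ := h b
    have : 0 < ‖f‖ := norm_pos_iff.2 hf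
    exact lt_of_lt_of_le (by positivity) (hb f)
  obtain ⟨c, hc, hlow⟩ := exists_lower_bound_of_le_sum hφ hψ hpos F (half_pos hA)
  have hunit : ∀ (b : ι → Bool) (f : E), ‖f‖ = 1 → min (A / 2) c ≤ weaveEnergy φ ψ b f := by
    intro b f hf
    rcases le_or_gt (A / 2) (∑ i ∈ F, (‖⟪f, φ i⟫‖ ^ 2 + ‖⟪f, ψ i⟫‖ ^ 2)) with hs | hs
    · exact (min_le_right _ _).trans (hlow b f hf hs)
    · -- Replacing `b` by `b₀` on `F` gives energy at least `A` and changes it by less than `A / 2`.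
      have h1 := hcyl (fun i => if i ∈ F then b₀ i else b i) (fun i hi => if_pos hi) f
      have h2 := weaveEnergy_le_add_sum hφ hψ F b (fun i => if i ∈ F then b₀ i else b i)
        (fun i hi => if_neg hi) f
      rw [hf] at h1
      refine (min_le_left _ _).trans ?_
      linarith
  refine ⟨min (A / 2) c, lt_min (half_pos hA) hc, fun b f => ?_⟩
  rcases eq_or_ne f 0 with rfl | hf
  · simp [weaveEnergy]
  · have hn : 0 < ‖f‖ := norm_pos_iff.2 hf
    have h1 := hunit b (((‖f‖⁻¹ : ℝ) : ℂ) • f) (by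
      rw [norm_smul, Complex.norm_real, norm_inv, norm_norm, inv_mul_cancel₀ hn.ne'])
    rw [weaveEnergy_smul, Complex.norm_real, norm_inv, norm_norm, inv_pow] at h1
    rwa [mul_comm, ← le_inv_mul_iff₀ (by positivity)]

end Weavings

lemma weaving_eq_cond {E ι : Type*} (φ ψ : ι → E) (b : ι → Bool) (i : ι) :
    weaving φ ψ {i | b i = true} i = cond (b i) (φ i) (ψ i) := by
  unfold weaving
  cases hb : b i <;> simp [hb]

/-- Two frames are woven if and only if they are weakly woven,
i.e. every weaving is a frame (with bounds possibly depending on the subset). -/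
theorem woven_iff_weakly_woven (φ ψ : I → H) (hφ : IsFrame φ) (hψ : IsFrame ψ) :
    Woven φ ψ ↔ ∀ J : Set I, IsFrame (weaving φ ψ J) := by
  constructor
  · rintro ⟨A, B, h⟩ J
    exact ⟨A, B, h J⟩
  intro h
  classical
  obtain ⟨A₁, B₁, hA₁, hAB₁, h₁⟩ := hφ
  obtain ⟨A₂, B₂, hA₂, hAB₂, h₂⟩ := hψ
  have s₁ : ∀ f : H, Summable fun i => ‖⟪f, φ i⟫‖ ^ 2 := fun f => (h₁ f).1
  have s₂ : ∀ f : H, Summable fun i => ‖⟪f, ψ i⟫‖ ^ 2 := fun f => (h₂ f).1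
  have hE : ∀ b : I → Bool, ∃ A : ℝ, 0 < A ∧ ∀ f : H, A * ‖f‖ ^ 2 ≤ weaveEnergy φ ψ b f := by
    intro b
    obtain ⟨A, B, hA, -, hf⟩ := h {i | b i = true}
    simp only [weaving_eq_cond] at hf
    exact ⟨A, hA, fun f => (hf f).2.1⟩
  obtain ⟨A, hA, hlow⟩ := exists_uniform_lower_bound s₁ s₂ hE
  refine ⟨min A (B₁ + B₂), B₁ + B₂, fun J =>
    ⟨lt_min hA (by linarith), min_le_right _ _, fun f => ?_⟩⟩
  obtain ⟨b, rfl⟩ : ∃ b : I → Bool, {i | b i = true} = J := ⟨fun i => decide (i ∈ J), by simp⟩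
  simp only [weaving_eq_cond]
  have hs := summable_weave s₁ s₂ b f
  refine ⟨hs, le_trans (by gcongr; exact min_le_left _ _) (hlow b f), ?_⟩
  calc ∑' i, ‖⟪f, cond (b i) (φ i) (ψ i)⟫‖ ^ 2
      ≤ ∑' i, (‖⟪f, φ i⟫‖ ^ 2 + ‖⟪f, ψ i⟫‖ ^ 2) :=
        hs.tsum_le_tsum (fun i => norm_inner_cond_sq_le _ _ _ _) ((s₁ f).add (s₂ f))
    _ = ∑' i, ‖⟪f, φ i⟫‖ ^ 2 + ∑' i, ‖⟪f, ψ i⟫‖ ^ 2 := (s₁ f).tsum_add (s₂ f)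
    _ ≤ (B₁ + B₂) * ‖f‖ ^ 2 := by
        have := (h₁ f).2.2
        have := (h₂ f).2.2
        linarith
end
end

section
/- Let φ = {φ_i}_{i∈I} be a frame for a separable Hilbert space H with frame bounds A_φ ≤ B_φ, and let T be a bounded invertible operator on H satisfying ‖I_H − T‖² < A_φ/B_φ. Then φ and Tφ = {Tφ_i}_{i∈I} are woven, with universal lower bound (√A_φ − √B_φ‖I_H − T*‖)². -/
/-!
For `f : H` put `S = 1 - T*`. Since `⟪f, T φᵢ⟫ = ⟪T* f, φᵢ⟫`, each coefficient of `f` against a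
weaving of `φ` and `Tφ` differs from `⟪f, φᵢ⟫` by either `0` or `⟪S f, φᵢ⟫`. Minkowski's inequality
in `ℓ²` (`sqrt_tsum_sq_le_add`), together with the bounds of `φ` at `f` and at `S f`, gives
`√A ‖f‖ ≤ √W + √B ‖S‖ ‖f‖`, where `W` is the frame sum of the weaving; this is the lower bound.
It is positive because `‖S‖ = ‖1 - T‖ < √(A / B)`. The inequality `(x + y)² ≤ 2 (x² + y²)`
yields the universal upper bound `2 B (1 + ‖S‖²)`.
-/

open scoped ComplexInnerProductSpace

noncomputable section

variable {H : Type*} [NormedAddCommGroup H] [InnerProductSpace ℂ H] [CompleteSpace H]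
variable {I : Type*} [Countable I]

/-- `φ` and `ψ` are woven with universal lower bound `A`
(for some universal upper bound). -/
def WovenWithLowerBound (φ ψ : I → H) (A : ℝ) : Prop :=
  ∃ B : ℝ, ∀ J : Set I, IsFrameWith (weaving φ ψ J) A B

/-- Minkowski's inequality in `ℓ²`, for a family dominated by the sum of two others. -/
theorem sqrt_tsum_sq_le_add {ι : Type*} {a w d : ι → ℝ} (ha : ∀ i, 0 ≤ a i)
    (hw : ∀ i, 0 ≤ w i) (hd : ∀ i, 0 ≤ d i) (h : ∀ i, a i ≤ w i + d i)
    (sa : Summable fun i => a i ^ 2) (sw : Summable fun i => w i ^ 2)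
    (sd : Summable fun i => d i ^ 2) :
    √(∑' i, a i ^ 2) ≤ √(∑' i, w i ^ 2) + √(∑' i, d i ^ 2) := by
  have key := Real.Lp_add_le_tsum_of_nonneg (p := 2) one_le_two hw hd
    (by simpa using sw) (by simpa using sd)
  simp only [Real.rpow_ofNat, ← Real.sqrt_eq_rpow] at key
  exact (Real.sqrt_le_sqrt (sa.tsum_le_tsum
    (fun i => pow_le_pow_left₀ (ha i) (h i) 2) key.1)).trans key.2

/-- If `φ` is a frame with bounds `A ≤ B` and `T` is a bounded
invertible operator with `‖I - T‖² < A / B`, then `φ` and `Tφ` are woven with universal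
lower bound `(√A - √B * ‖I - T*‖)²`. -/
theorem woven_of_invertible_perturbation (φ : I → H) (A B : ℝ) (hφ : IsFrameWith φ A B)
    (T : H ≃L[ℂ] H)
    (hT : ‖(1 : H →L[ℂ] H) - (T : H →L[ℂ] H)‖ ^ 2 < A / B) :
    WovenWithLowerBound φ (fun i => T (φ i))
      ((Real.sqrt A -
        Real.sqrt B * ‖(1 : H →L[ℂ] H) - ContinuousLinearMap.adjoint (T : H →L[ℂ] H)‖) ^ 2) := by
  obtain ⟨hA, hAB, hf⟩ := hφ
  have hB : 0 < B := hA.trans_le hAB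
  set S : H →L[ℂ] H := 1 - ContinuousLinearMap.adjoint (T : H →L[ℂ] H) with hS
  have hnorm : ‖S‖ = ‖(1 : H →L[ℂ] H) - (T : H →L[ℂ] H)‖ := by
    rw [← LinearIsometryEquiv.norm_map ContinuousLinearMap.adjoint (1 - (T : H →L[ℂ] H)),
      map_sub, hS]
    congr 2
    exact (star_one (H →L[ℂ] H)).symm
  rw [← hnorm] at hT
  have hc : 0 ≤ ‖S‖ := norm_nonneg S
  have hpos : 0 < √A - √B * ‖S‖ := by
    rw [sub_pos]
    apply Real.lt_sqrt_of_sq_lt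
    rw [mul_pow, Real.sq_sqrt hB.le]
    rwa [lt_div_iff₀' hB] at hT
  refine ⟨2 * B * (1 + ‖S‖ ^ 2), fun J => ⟨by positivity, ?_, fun f => ?_⟩⟩
  · have h1 : (√A - √B * ‖S‖) ^ 2 ≤ √A ^ 2 :=
      pow_le_pow_left₀ hpos.le (sub_le_self _ (by positivity)) 2
    rw [Real.sq_sqrt hA.le] at h1
    nlinarith [mul_nonneg hB.le (sq_nonneg ‖S‖)]
  obtain ⟨sa, hal, hau⟩ := hf f
  obtain ⟨sd, -, hdu⟩ := hf (S f)
  have hSf : ‖S f‖ ≤ ‖S‖ * ‖f‖ := S.le_opNorm f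
  have hSf2 : ‖S f‖ ^ 2 ≤ ‖S‖ ^ 2 * ‖f‖ ^ 2 := by
    rw [← mul_pow]; exact pow_le_pow_left₀ (norm_nonneg _) hSf 2
  have hsub : ∀ i, ⟪f, T (φ i)⟫ = ⟪f, φ i⟫ - ⟪S f, φ i⟫ := fun i => by
    have h := ContinuousLinearMap.adjoint_inner_left (T : H →L[ℂ] H) (φ i) f
    simp only [ContinuousLinearEquiv.coe_coe] at h
    simp [hS, inner_sub_left, h]
  have hw1 : ∀ i, ‖⟪f, φ i⟫‖ ≤
      ‖⟪f, weaving φ (fun i => T (φ i)) J i⟫‖ + ‖⟪S f, φ i⟫‖ := fun i => by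
    unfold weaving
    split_ifs
    · exact le_add_of_nonneg_right (norm_nonneg _)
    · rw [hsub]; simpa using norm_add_le (⟪f, φ i⟫ - ⟪S f, φ i⟫) ⟪S f, φ i⟫
  have hw2 : ∀ i, ‖⟪f, weaving φ (fun i => T (φ i)) J i⟫‖ ^ 2 ≤
      2 * (‖⟪f, φ i⟫‖ ^ 2 + ‖⟪S f, φ i⟫‖ ^ 2) := fun i => by
    have h : ‖⟪f, weaving φ (fun i => T (φ i)) J i⟫‖ ≤ ‖⟪f, φ i⟫‖ + ‖⟪S f, φ i⟫‖ := by
      unfold weaving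
      split_ifs
      · exact le_add_of_nonneg_right (norm_nonneg _)
      · rw [hsub]; exact norm_sub_le _ _
    exact (pow_le_pow_left₀ (norm_nonneg _) h 2).trans add_sq_le
  have sad := (sa.add sd).mul_left 2
  have sw : Summable fun i => ‖⟪f, weaving φ (fun i => T (φ i)) J i⟫‖ ^ 2 :=
    Summable.of_nonneg_of_le (fun i => by positivity) hw2 sad
  refine ⟨sw, ?_, ?_⟩
  · have hM := sqrt_tsum_sq_le_add (fun i => norm_nonneg _) (fun i => norm_nonneg _)
      (fun i => norm_nonneg _) hw1 sa sw sd
    have h1 : √A * ‖f‖ ≤ √(∑' i, ‖⟪f, φ i⟫‖ ^ 2) := by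
      apply Real.le_sqrt_of_sq_le
      rwa [mul_pow, Real.sq_sqrt hA.le]
    have h2 : √(∑' i, ‖⟪S f, φ i⟫‖ ^ 2) ≤ √B * (‖S‖ * ‖f‖) := by
      rw [Real.sqrt_le_left (by positivity), mul_pow, mul_pow, Real.sq_sqrt hB.le]
      exact hdu.trans (mul_le_mul_of_nonneg_left hSf2 hB.le)
    rw [← mul_pow, ← Real.le_sqrt (by positivity) (tsum_nonneg fun i => by positivity)]
    linarith
  · have h := sw.tsum_le_tsum hw2 sad
    rw [tsum_mul_left, sa.tsum_add sd] at h
    nlinarith [mul_le_mul_of_nonneg_left hSf2 hB.le]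
end
end

section
/- Let φ = {φ_i}_{i∈I} and ψ = {ψ_i}_{i∈I} be frames for a separable Hilbert space H with bounds A_φ ≤ B_φ and A_ψ ≤ B_ψ respectively. Suppose there exist nonnegative numbers λ₁, λ₂, μ such that for all {c_i}_{i∈I} ∈ ℓ²(I), ‖∑_{i∈I}c_i(φ_i − ψ_i)‖ ≤ λ₁‖∑_{i∈I}c_iφ_i‖ + λ₂‖∑_{i∈I}c_iψ_i‖ + μ(∑_{i∈I}|c_i|²)^{1/2}, and that λ₁√B_φ + λ₂√B_ψ + μ < √A_φ. Then φ and ψ are woven, with universal lower bound (√A_φ − λ₁√B_φ − λ₂√B_ψ − μ)² and universal upper bound B_φ + B_ψ. -/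
/-!
The weaving along `J` differs from `φ` only off `J`, where the difference is `φ i - ψ i`.
Write `ε = lam₁ √Bφ + lam₂ √Bψ + μ`. On a finite set `F` of indices, testing the perturbation
hypothesis on the coefficients `c i = ⟪φ i - ψ i, f⟫` gives
`∑ ‖c i‖² = ⟪f, ∑ c i • (φ i - ψ i)⟫ ≤ ‖f‖ ε (∑ ‖c i‖²)^(1/2)`, because a Bessel bound `B` for the
analysis operator is a bound `√B` for the synthesis operator (`norm_sum_smul_le`). Hence
`(∑ ‖⟪f, φ i - ψ i⟫‖²)^(1/2) ≤ ε ‖f‖` over every finite set (`sqrt_sum_diff_le`), and Minkowski's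
inequality in `ℓ²` gives the lower bound `√Aφ - ε` for the analysis operator of each weaving. The
upper bound holds since each term of a weaving is at most the sum of the terms of `φ` and `ψ`.
-/

open scoped ComplexInnerProductSpace

noncomputable section

variable {H : Type*} [NormedAddCommGroup H] [InnerProductSpace ℂ H] [CompleteSpace H]
variable {I : Type*} [Countable I]

/-- Minkowski's inequality in `ℓ²`, for a sequence dominated by a sum of two others. -/
lemma sqrt_sum_sq_le_add {ι : Type*} (F : Finset ι) (x y z : ι → ℝ) (hz : ∀ i ∈ F, 0 ≤ z i)
    (h : ∀ i ∈ F, z i ≤ x i + y i) :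
    √(∑ i ∈ F, z i ^ 2) ≤ √(∑ i ∈ F, x i ^ 2) + √(∑ i ∈ F, y i ^ 2) := by
  apply Real.sqrt_le_iff.2
  refine ⟨by positivity, ?_⟩
  have hx : 0 ≤ ∑ i ∈ F, x i ^ 2 := Finset.sum_nonneg fun _ _ => sq_nonneg _
  have hy : 0 ≤ ∑ i ∈ F, y i ^ 2 := Finset.sum_nonneg fun _ _ => sq_nonneg _
  have hcs := Real.sum_mul_le_sqrt_mul_sqrt F x y
  calc ∑ i ∈ F, z i ^ 2 ≤ ∑ i ∈ F, (x i + y i) ^ 2 :=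
        Finset.sum_le_sum fun i hi => pow_le_pow_left₀ (hz i hi) (h i hi) 2
    _ = ∑ i ∈ F, x i ^ 2 + ∑ i ∈ F, y i ^ 2 + 2 * ∑ i ∈ F, x i * y i := by
        rw [Finset.mul_sum, ← Finset.sum_add_distrib, ← Finset.sum_add_distrib]
        exact Finset.sum_congr rfl fun i _ => by ring
    _ ≤ _ := by
        rw [add_sq, Real.sq_sqrt hx, Real.sq_sqrt hy]
        linarith

/-- The synthesis operator, being adjoint to the analysis operator, is bounded by `√B`. -/
lemma norm_sum_smul_le {E ι : Type*} [NormedAddCommGroup E] [InnerProductSpace ℂ E]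
    {φ : ι → E} {B : ℝ} (F : Finset ι)
    (hB : ∀ f : E, ∑ i ∈ F, ‖⟪f, φ i⟫‖ ^ 2 ≤ B * ‖f‖ ^ 2) (c : ι → ℂ) :
    ‖∑ i ∈ F, c i • φ i‖ ≤ √B * √(∑ i ∈ F, ‖c i‖ ^ 2) := by
  set g := ∑ i ∈ F, c i • φ i with hg
  rcases (norm_nonneg g).eq_or_lt with h0 | hpos
  · rw [← h0]; positivity
  have h1 : ‖g‖ ^ 2 ≤ ∑ i ∈ F, ‖c i‖ * ‖⟪g, φ i⟫‖ := by
    have h2 : ⟪g, g⟫ = ∑ i ∈ F, c i * ⟪g, φ i⟫ := by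
      conv_lhs => rw [hg, inner_sum]
      exact Finset.sum_congr rfl fun i _ => by rw [inner_smul_right]
    have h3 : ‖⟪g, g⟫‖ = ‖g‖ ^ 2 := by
      rw [inner_self_eq_norm_sq_to_K]; simp
    rw [← h3, h2]
    exact (norm_sum_le _ _).trans_eq (Finset.sum_congr rfl fun i _ => norm_mul _ _)
  have h4 : √(∑ i ∈ F, ‖⟪g, φ i⟫‖ ^ 2) ≤ √B * ‖g‖ := by
    refine (Real.sqrt_le_sqrt (hB g)).trans_eq ?_
    rw [Real.sqrt_mul' _ (sq_nonneg _), Real.sqrt_sq hpos.le]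
  have h5 := h1.trans (Real.sum_mul_le_sqrt_mul_sqrt F (fun i => ‖c i‖) (fun i => ‖⟪g, φ i⟫‖))
  have h6 := mul_le_mul_of_nonneg_left h4 (Real.sqrt_nonneg (∑ i ∈ F, ‖c i‖ ^ 2))
  refine le_of_mul_le_mul_right ?_ hpos
  linarith

/-- If the synthesis operator of the differences is bounded by `lam₁`, `lam₂`, `μ` in terms of those
of `φ` and `ψ`, then their analysis operator is bounded by `lam₁ √Bφ + lam₂ √Bψ + μ`. -/
lemma sqrt_sum_diff_le {E ι : Type*} [NormedAddCommGroup E] [InnerProductSpace ℂ E]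
    {φ ψ : ι → E} {Bφ Bψ lam₁ lam₂ μ : ℝ} (F : Finset ι)
    (hφ : ∀ f : E, ∑ i ∈ F, ‖⟪f, φ i⟫‖ ^ 2 ≤ Bφ * ‖f‖ ^ 2)
    (hψ : ∀ f : E, ∑ i ∈ F, ‖⟪f, ψ i⟫‖ ^ 2 ≤ Bψ * ‖f‖ ^ 2)
    (hlam₁ : 0 ≤ lam₁) (hlam₂ : 0 ≤ lam₂) (hμ : 0 ≤ μ)
    (hpert : ∀ c : ι → ℂ, ‖∑ i ∈ F, c i • (φ i - ψ i)‖ ≤ lam₁ * ‖∑ i ∈ F, c i • φ i‖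
      + lam₂ * ‖∑ i ∈ F, c i • ψ i‖ + μ * √(∑ i ∈ F, ‖c i‖ ^ 2)) (f : E) :
    √(∑ i ∈ F, ‖⟪f, φ i - ψ i⟫‖ ^ 2) ≤ (lam₁ * √Bφ + lam₂ * √Bψ + μ) * ‖f‖ := by
  set c : ι → ℂ := fun i => ⟪φ i - ψ i, f⟫ with hc
  have hcn : ∑ i ∈ F, ‖⟪f, φ i - ψ i⟫‖ ^ 2 = ∑ i ∈ F, ‖c i‖ ^ 2 :=
    Finset.sum_congr rfl fun i _ => by rw [hc, norm_inner_symm]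
  rw [hcn]
  set S := ∑ i ∈ F, ‖c i‖ ^ 2 with hS
  have hS0 : 0 ≤ S := Finset.sum_nonneg fun _ _ => sq_nonneg _
  rcases (Real.sqrt_nonneg S).eq_or_lt with h0 | hpos
  · rw [← h0]; positivity
  have h1 : S ≤ ‖f‖ * ‖∑ i ∈ F, c i • (φ i - ψ i)‖ := by
    refine le_trans (le_of_eq ?_) (norm_inner_le_norm (𝕜 := ℂ) f _)
    have h2 : ⟪f, ∑ i ∈ F, c i • (φ i - ψ i)⟫ = (S : ℂ) := by
      rw [inner_sum, hS, Complex.ofReal_sum]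
      refine Finset.sum_congr rfl fun i _ => ?_
      rw [inner_smul_right, ← inner_conj_symm f, Complex.mul_conj, Complex.normSq_eq_norm_sq]
    rw [h2, Complex.norm_real, Real.norm_of_nonneg hS0]
  have h3 := mul_le_mul_of_nonneg_left (norm_sum_smul_le F hφ c) hlam₁
  have h4 := mul_le_mul_of_nonneg_left (norm_sum_smul_le F hψ c) hlam₂
  have h5 : ‖∑ i ∈ F, c i • (φ i - ψ i)‖ ≤ (lam₁ * √Bφ + lam₂ * √Bψ + μ) * √S := by
    linarith [hpert c]
  have h6 := mul_le_mul_of_nonneg_left h5 (norm_nonneg f)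
  refine le_of_mul_le_mul_right ?_ hpos
  rw [Real.mul_self_sqrt hS0]
  linarith

/-- (Perturbation.) Let `φ` and `ψ` be frames with bounds
`Aφ ≤ Bφ` and `Aψ ≤ Bψ`. Suppose there are nonnegative `λ₁, λ₂, μ` such that for every
`ℓ²` coefficient sequence `c` (with `sφ = ∑ c i • φ i`, `sψ = ∑ c i • ψ i`,
`sd = ∑ c i • (φ i - ψ i)`) one has
`‖sd‖ ≤ λ₁ ‖sφ‖ + λ₂ ‖sψ‖ + μ (∑ |c i|²)^(1/2)`, and that
`λ₁ √Bφ + λ₂ √Bψ + μ < √Aφ`. Then `φ` and `ψ` are woven with universal lower bound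
`(√Aφ - λ₁ √Bφ - λ₂ √Bψ - μ)²` and universal upper bound `Bφ + Bψ`. -/
theorem woven_of_perturbation (φ ψ : I → H) (Aφ Bφ Aψ Bψ : ℝ)
    (hφ : IsFrameWith φ Aφ Bφ) (hψ : IsFrameWith ψ Aψ Bψ)
    (lam₁ lam₂ μ : ℝ) (hlam₁ : 0 ≤ lam₁) (hlam₂ : 0 ≤ lam₂) (hμ : 0 ≤ μ)
    (hpert : ∀ c : I → ℂ, Summable (fun i => ‖c i‖ ^ 2) →
      ∀ sφ sψ sd : H, HasSum (fun i => c i • φ i) sφ → HasSum (fun i => c i • ψ i) sψ →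
        HasSum (fun i => c i • (φ i - ψ i)) sd →
        ‖sd‖ ≤ lam₁ * ‖sφ‖ + lam₂ * ‖sψ‖ + μ * Real.sqrt (∑' i, ‖c i‖ ^ 2))
    (hcond : lam₁ * Real.sqrt Bφ + lam₂ * Real.sqrt Bψ + μ < Real.sqrt Aφ) :
    ∀ J : Set I, IsFrameWith (weaving φ ψ J)
      ((Real.sqrt Aφ - lam₁ * Real.sqrt Bφ - lam₂ * Real.sqrt Bψ - μ) ^ 2)
      (Bφ + Bψ) := by
  classical
  intro J
  obtain ⟨hAφ, hABφ, hφ⟩ := hφ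
  obtain ⟨hAψ, hABψ, hψ⟩ := hψ
  have hBφ : ∀ (F : Finset I) (f : H), ∑ i ∈ F, ‖⟪f, φ i⟫‖ ^ 2 ≤ Bφ * ‖f‖ ^ 2 := fun F f =>
    ((hφ f).1.sum_le_tsum F fun _ _ => sq_nonneg _).trans (hφ f).2.2
  have hBψ : ∀ (F : Finset I) (f : H), ∑ i ∈ F, ‖⟪f, ψ i⟫‖ ^ 2 ≤ Bψ * ‖f‖ ^ 2 := fun F f =>
    ((hψ f).1.sum_le_tsum F fun _ _ => sq_nonneg _).trans (hψ f).2.2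
  have hpertF : ∀ (F : Finset I) (c : I → ℂ), ‖∑ i ∈ F, c i • (φ i - ψ i)‖ ≤
      lam₁ * ‖∑ i ∈ F, c i • φ i‖ + lam₂ * ‖∑ i ∈ F, c i • ψ i‖
        + μ * √(∑ i ∈ F, ‖c i‖ ^ 2) := by
    intro F c
    -- The hypothesis is applied to `c` truncated to `F`, whose series are finite sums.
    set c' : I → ℂ := fun i => if i ∈ F then c i else 0 with hc'
    have hv : ∀ v : I → H, HasSum (fun i => c' i • v i) (∑ i ∈ F, c i • v i) := by
      intro v
      have h : ∑ i ∈ F, c i • v i = ∑ i ∈ F, c' i • v i :=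
        Finset.sum_congr rfl fun i hi => by simp [hc', hi]
      rw [h]
      exact hasSum_sum_of_ne_finset_zero fun i hi => by simp [hc', hi]
    have hn : HasSum (fun i => ‖c' i‖ ^ 2) (∑ i ∈ F, ‖c i‖ ^ 2) := by
      have h : ∑ i ∈ F, ‖c i‖ ^ 2 = ∑ i ∈ F, ‖c' i‖ ^ 2 :=
        Finset.sum_congr rfl fun i hi => by simp [hc', hi]
      rw [h]
      exact hasSum_sum_of_ne_finset_zero fun i hi => by simp [hc', hi]
    have h := hpert c' hn.summable _ _ _ (hv φ) (hv ψ) (hv fun i => φ i - ψ i)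
    rwa [hn.tsum_eq] at h
  set ε := lam₁ * √Bφ + lam₂ * √Bψ + μ with hε
  have hε0 : 0 ≤ ε := by positivity
  have hconst : √Aφ - lam₁ * √Bφ - lam₂ * √Bψ - μ = √Aφ - ε := by rw [hε]; ring
  rw [hconst]
  refine ⟨by have := sub_pos.2 hcond; positivity, ?_, fun f => ?_⟩
  · have h1 : (√Aφ - ε) ^ 2 ≤ √Aφ ^ 2 :=
      pow_le_pow_left₀ (sub_pos.2 hcond).le (by linarith) 2
    rw [Real.sq_sqrt hAφ.le] at h1
    linarith
  have hle : ∀ i, ‖⟪f, weaving φ ψ J i⟫‖ ^ 2 ≤ ‖⟪f, φ i⟫‖ ^ 2 + ‖⟪f, ψ i⟫‖ ^ 2 := by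
    intro i
    unfold weaving
    split_ifs
    · exact le_add_of_nonneg_right (sq_nonneg _)
    · exact le_add_of_nonneg_left (sq_nonneg _)
  have hsum := (hφ f).1.add (hψ f).1
  have hw : Summable fun i => ‖⟪f, weaving φ ψ J i⟫‖ ^ 2 :=
    Summable.of_nonneg_of_le (fun _ => sq_nonneg _) hle hsum
  refine ⟨hw, ?_, ?_⟩
  · set T := ∑' i, ‖⟪f, weaving φ ψ J i⟫‖ ^ 2 with hT
    have hT0 : 0 ≤ T := tsum_nonneg fun _ => sq_nonneg _
    have hF : ∀ F : Finset I, ∑ i ∈ F, ‖⟪f, φ i⟫‖ ^ 2 ≤ (√T + ε * ‖f‖) ^ 2 := by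
      intro F
      have h1 := sqrt_sum_sq_le_add F (fun i => ‖⟪f, weaving φ ψ J i⟫‖)
        (fun i => ‖⟪f, φ i - ψ i⟫‖) (fun i => ‖⟪f, φ i⟫‖) (fun _ _ => norm_nonneg _) (by
          intro i _
          unfold weaving
          split_ifs
          · exact le_add_of_nonneg_right (norm_nonneg _)
          · refine le_trans (le_of_eq ?_) (norm_add_le _ _)
            rw [← inner_add_right, add_sub_cancel])
      have h2 := sqrt_sum_diff_le F (hBφ F) (hBψ F) hlam₁ hlam₂ hμ (hpertF F) f
      have h3 := Real.sqrt_le_sqrt (hw.sum_le_tsum F fun _ _ => sq_nonneg _)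
      exact (Real.sqrt_le_iff.1 (h1.trans (add_le_add h3 h2))).2
    have h4 : Aφ * ‖f‖ ^ 2 ≤ (√T + ε * ‖f‖) ^ 2 :=
      (hφ f).2.1.trans ((hφ f).1.tsum_le_of_sum_le hF)
    have h5 : √Aφ * ‖f‖ ≤ √T + ε * ‖f‖ := by
      refine (sq_le_sq₀ (by positivity) (by positivity)).1 ?_
      rwa [mul_pow, Real.sq_sqrt hAφ.le]
    have h6 : (√Aφ - ε) * ‖f‖ ≤ √T := by linarith
    have h7 := pow_le_pow_left₀ (mul_nonneg (sub_pos.2 hcond).le (norm_nonneg f)) h6 2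
    rwa [mul_pow, Real.sq_sqrt hT0] at h7
  · have h1 := hw.tsum_le_tsum hle hsum
    rw [(hφ f).1.tsum_add (hψ f).1] at h1
    linarith [(hφ f).2.2, (hψ f).2.2]
end
end

section
/- Let φ = {φ_i}_{i∈I} be a frame for a separable Hilbert space H with lower frame bound A_φ, let h ∈ H be a nonzero vector, and let {λ_i}_{i∈I} be a sequence of scalars such that ∑_{i∈I}|λ_i|² < α A_φ/‖h‖² for some α < 1. Then {φ_i}_{i∈I} and {φ_i + λ_i h}_{i∈I} are woven. -/
/-!
Every weaving has the form `φ i + c i • h` with `‖c i‖ ≤ ‖lam i‖`. With `a = ⟪f, φ i⟫`,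
`x = ⟪f, φ i + c i • h⟫` and `b = x - a`, the Cauchy–Schwarz inequality gives
`∑ ‖b‖ ^ 2 ≤ ‖f‖ ^ 2 * ‖h‖ ^ 2 * ∑ ‖lam i‖ ^ 2 ≤ α * Aφ * ‖f‖ ^ 2`. For the upper frame bound,
`‖x‖ ^ 2 ≤ 2 * (‖a‖ ^ 2 + ‖b‖ ^ 2)`. For the lower one,
`t * (1 - t) * ‖a‖ ^ 2 ≤ t * ‖x‖ ^ 2 + (1 - t) * ‖b‖ ^ 2` for `t ∈ [0, 1]`, a weighted form of the
triangle inequality which avoids Minkowski's inequality for series; summing it yields the lower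
bound `(1 - t) * (t - α) * Aφ`, which is positive for `t = (1 + α) / 2`.
-/

open scoped ComplexInnerProductSpace

noncomputable section

variable {H : Type*} [NormedAddCommGroup H] [InnerProductSpace ℂ H] [CompleteSpace H]
variable {I : Type*} [Countable I]

/-- The weighted triangle inequality; the defect after bounding `a ≤ x + b` is
`(t * x - (1 - t) * b) ^ 2`. -/
lemma weighted_sq_le {a x b t : ℝ} (ha : 0 ≤ a) (hab : a ≤ x + b) (ht0 : 0 ≤ t) (ht1 : t ≤ 1) :
    t * (1 - t) * a ^ 2 ≤ t * x ^ 2 + (1 - t) * b ^ 2 := by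
  have h1 : a ^ 2 ≤ (x + b) ^ 2 := pow_le_pow_left₀ ha hab 2
  have h2 : 0 ≤ t * (1 - t) := mul_nonneg ht0 (by linarith)
  nlinarith [mul_le_mul_of_nonneg_left h1 h2, sq_nonneg (t * x - (1 - t) * b)]

/-- Let `φ` be a frame with lower bound `Aφ`, `h ≠ 0`, and `lam`
a sequence of scalars with `∑ |lam i|² < α Aφ / ‖h‖²` for some `α < 1`. Then `φ` and
`{φ i + lam i • h}` are woven. -/
theorem woven_of_rank_one_perturbation (φ : I → H) (Aφ Bφ : ℝ)
    (hφ : IsFrameWith φ Aφ Bφ) (h : H) (hh : h ≠ 0)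
    (lam : I → ℂ) (hlam : Summable (fun i => ‖lam i‖ ^ 2))
    (α : ℝ) (hα : α < 1)
    (hsmall : ∑' i, ‖lam i‖ ^ 2 < α * Aφ / ‖h‖ ^ 2) :
    Woven φ (fun i => φ i + lam i • h) := by
  obtain ⟨hA, hAB, hfr⟩ := hφ
  have hh2 : 0 < ‖h‖ ^ 2 := by positivity
  have hS0 : 0 ≤ ∑' i, ‖lam i‖ ^ 2 := tsum_nonneg fun i => by positivity
  have hS : (∑' i, ‖lam i‖ ^ 2) * ‖h‖ ^ 2 < α * Aφ := (lt_div_iff₀ hh2).1 hsmall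
  have hα0 : 0 < α := by
    have : 0 < α * Aφ := lt_of_le_of_lt (by positivity) hS
    exact pos_of_mul_pos_left this hA.le
  -- For `t = (1 + α) / 2` one has `(1 - t) * (t - α) = ((1 - α) / 2) ^ 2`.
  refine ⟨((1 - α) / 2) ^ 2 * Aφ, 2 * Bφ + 2 * (α * Aφ), fun J => ⟨?_, ?_, fun f => ?_⟩⟩
  · have : 0 < (1 - α) / 2 := by linarith
    positivity
  · have h1 : ((1 - α) / 2) ^ 2 ≤ 1 := pow_le_one₀ (by linarith) (by linarith)
    nlinarith [mul_pos hα0 hA]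
  obtain ⟨hs, hlo, hup⟩ := hfr f
  set x : I → ℂ := fun i => ⟪f, weaving φ (fun i => φ i + lam i • h) J i⟫ with hx
  set d : I → ℝ := fun i => ‖lam i‖ * (‖f‖ * ‖h‖) with hd
  have hdiff : ∀ i, ‖x i - ⟪f, φ i⟫‖ ≤ d i := by
    intro i
    by_cases hi : i ∈ J
    · simp only [hx, hd, weaving, hi, if_true, sub_self, norm_zero]
      positivity
    · simp only [hx, hd, weaving, hi, if_false, inner_add_right, inner_smul_right,
        add_sub_cancel_left, norm_mul]
      gcongr
      exact norm_inner_le_norm f h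
  have hd2 : (fun i => d i ^ 2) = fun i => ‖lam i‖ ^ 2 * (‖f‖ * ‖h‖) ^ 2 := by
    funext i
    simp only [hd, mul_pow]
  have hds : Summable (fun i => d i ^ 2) := hd2 ▸ hlam.mul_right _
  have hdle : ∑' i, d i ^ 2 ≤ α * Aφ * ‖f‖ ^ 2 := by
    rw [hd2, tsum_mul_right]
    nlinarith [mul_le_mul_of_nonneg_right hS.le (sq_nonneg ‖f‖)]
  have hupi : ∀ i, ‖x i‖ ^ 2 ≤ 2 * ‖⟪f, φ i⟫‖ ^ 2 + 2 * d i ^ 2 := by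
    intro i
    have h1 : ‖x i‖ ≤ ‖⟪f, φ i⟫‖ + d i :=
      (norm_le_norm_add_norm_sub' (x i) ⟪f, φ i⟫).trans (by linarith [hdiff i])
    have h2 := pow_le_pow_left₀ (norm_nonneg _) h1 2
    nlinarith [sq_nonneg (‖⟪f, φ i⟫‖ - d i)]
  have hsum2 := (hs.mul_left 2).add (hds.mul_left 2)
  have hxs : Summable (fun i => ‖x i‖ ^ 2) :=
    Summable.of_nonneg_of_le (fun i => by positivity) hupi hsum2
  refine ⟨hxs, ?_, ?_⟩
  · have hle := ((hs.mul_left ((1 + α) / 2 * (1 - (1 + α) / 2)))).tsum_le_tsum (fun i => by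
      have h1 : ‖⟪f, φ i⟫‖ ≤ ‖x i‖ + d i :=
        (norm_le_norm_add_norm_sub (x i) ⟪f, φ i⟫).trans (by linarith [hdiff i])
      exact weighted_sq_le (norm_nonneg _) h1 (by linarith) (by linarith))
      ((hxs.mul_left ((1 + α) / 2)).add (hds.mul_left (1 - (1 + α) / 2)))
    rw [(hxs.mul_left _).tsum_add (hds.mul_left _), tsum_mul_left, tsum_mul_left,
      tsum_mul_left] at hle
    have hx0 : 0 ≤ ∑' i, ‖x i‖ ^ 2 := tsum_nonneg fun i => by positivity
    have e1 := mul_le_mul_of_nonneg_left hlo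
      (show 0 ≤ (1 + α) / 2 * (1 - (1 + α) / 2) from mul_nonneg (by linarith) (by linarith))
    have e2 := mul_le_mul_of_nonneg_left hdle (show 0 ≤ 1 - (1 + α) / 2 by linarith)
    -- Since `t ≤ 1`, the factor `t` in front of the frame sum of the weaving may be dropped.
    have e3 := mul_nonneg (show 0 ≤ 1 - (1 + α) / 2 by linarith) hx0
    linarith
  · have hle := hxs.tsum_le_tsum hupi hsum2
    rw [(hs.mul_left _).tsum_add (hds.mul_left _), tsum_mul_left, tsum_mul_left] at hle
    linarith
end
end

section
/- Let m, n ∈ ℕ be relatively prime and let φ = {φ_i}_{i=1}^n be an ε-nearly equal-norm and ε-nearly Parseval frame for an m-dimensional Hilbert space H_m with lower frame bound A_φ, where 0 < ε < min{1/2, 8α√A_φ/(4√m + 27m²n(n−1)⁸)} for some α < 1. Then there exists an equal-norm Parseval frame ψ = {ψ_i}_{i=1}^n for H_m such that φ and ψ are woven. -/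
/-!
The only information needed about `φ` is that it spans `H` (and that `H ≠ 0`): every spanning
family of `n` vectors is woven with some equal-norm Parseval frame.

In finite dimension, `φ` and `ψ` are woven as soon as every weaving spans, i.e. no nonzero `f` is
orthogonal to all of its vectors: there are finitely many weavings, each spanning one has a
positive lower bound (`exists_lower_bound`), and the smallest of these is universal.

Let `η` be the harmonic frame given by the first `m` rows of the `n × n` Fourier matrix. It is
equal-norm and Parseval, and by the Vandermonde determinant any `k` of its vectors span a space of
dimension at least `min m k` (`le_finrank_span_harmonicFrame`). The frame sought is `ψ = u η` for a
suitable unitary `u`, which is still equal-norm and Parseval.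

For a single `J`, the orthogonal complement `V` of `{φ i | i ∈ J}` has dimension at most
`min m |Jᶜ|`, since `φ` spans. So some unitary maps `V` into the span of `{η i | i ∉ J}`, and its
inverse `u` makes the weaving along `J` spanning (`exists_unitary_weaving`).

One `u` serves all `J` at once by genericity (`exists_common_unitary_weaving`). With
`u = exp (i a)`, `a` self-adjoint, the determinant of the frame operator of the weaving along `J`
is a real-analytic function of `a`. It is not identically zero, because up to a scalar, which does
not change spans, every unitary is such an exponential (`exists_unitary_smul_eq_exp`). Hence the
good `a` for each `J` form a dense open set, and finitely many such sets meet.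
-/

open scoped ComplexInnerProductSpace

noncomputable section

variable {H : Type*} [NormedAddCommGroup H] [InnerProductSpace ℂ H] [CompleteSpace H]
variable {I : Type*} [Countable I]

set_option linter.unusedSectionVars false

/-! ### Unitaries of a finite-dimensional space -/

/-- Up to a nonzero scalar, every unitary is the exponential of a skew-adjoint operator: after
multiplication by a suitable unimodular number, `-1` is not in the (finite) spectrum, and the
principal branch of the argument applies. -/
lemma exists_unitary_smul_eq_exp [FiniteDimensional ℂ H] (u : unitary (H →L[ℂ] H)) :
    ∃ (z : ℂ) (a : selfAdjoint (H →L[ℂ] H)), z ≠ 0 ∧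
      NormedSpace.exp (Complex.I • (a : H →L[ℂ] H)) = z • (u : H →L[ℂ] H) := by
  have hfin : (spectrum ℂ (u : H →L[ℂ] H)).Finite := by
    rw [← AlgEquiv.spectrum_eq (Module.End.toContinuousLinearMap H).symm (u : H →L[ℂ] H)]
    exact Module.End.finite_spectrum _
  have hinf : (Metric.sphere (0 : ℂ) 1).Infinite := by
    have hconn := isPreconnected_sphere (E := ℂ) (by rw [Complex.rank_real_complex]; norm_num) 0 1
    refine hconn.infinite_of_nontrivial ?_
    exact ⟨1, by simp, -1, by simp, by norm_num⟩
  obtain ⟨w, hw, hws⟩ := hinf.exists_notMem_finite hfin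
  have hw1 : ‖w‖ = 1 := by simpa using hw
  have hw0 : w ≠ 0 := by rintro rfl; simp at hw1
  have hu : (-w⁻¹) • (u : H →L[ℂ] H) ∈ unitary (H →L[ℂ] H) := by
    have hz : (-w⁻¹) ∈ unitary ℂ := by
      rw [Unitary.mem_iff]
      constructor <;> simp [Complex.mul_conj, ← Complex.normSq_eq_conj_mul_self,
        Complex.normSq_eq_norm_sq, hw1, ← mul_inv]
    exact Unitary.smul_mem_of_mem hz u.2
  refine ⟨-w⁻¹, Unitary.argSelfAdjoint ⟨_, hu⟩, by simpa using hw0, ?_⟩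
  have h2 : ‖((-w⁻¹) • (u : H →L[ℂ] H)) - 1‖ < 2 := by
    rw [Unitary.norm_sub_one_lt_two_iff hu]
    intro h
    apply hws
    apply (spectrum.smul_mem_smul_iff (r := Units.mk0 (-w⁻¹) (by simpa using hw0)) (s := w)
      (a := (u : H →L[ℂ] H))).1
    have hmul : -w⁻¹ * w = -1 := by simp [hw0]
    rw [← hmul] at h
    exact h
  have := expUnitary_argSelfAdjoint (u := ⟨_, hu⟩) h2
  exact congrArg Subtype.val this

/-- A subspace can be moved by a unitary into any subspace of at least its dimension. -/
lemma exists_isometry (V W : Submodule ℂ H) [FiniteDimensional ℂ H]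
    (h : Module.finrank ℂ V ≤ Module.finrank ℂ W) :
    ∃ L : H ≃ₗᵢ[ℂ] H, ∀ f ∈ V, L f ∈ W := by
  let bV := stdOrthonormalBasis ℂ V
  let bW := stdOrthonormalBasis ℂ W
  let v : Fin (Module.finrank ℂ V) → W := fun i => bW (Fin.castLE h i)
  have hv : Orthonormal ℂ v := bW.orthonormal.comp _ (Fin.castLE_injective h)
  let L0 : V →ₗᵢ[ℂ] W := (bV.toBasis.constr ℂ v).isometryOfOrthonormal (v := bV.toBasis)
    (by simp) (by convert hv; ext i; simp)
  let L1 : V →ₗᵢ[ℂ] H := W.subtypeₗᵢ.comp L0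
  refine ⟨L1.extend.toLinearIsometryEquiv rfl, fun f hf => ?_⟩
  have := L1.extend_apply ⟨f, hf⟩
  simp only [LinearIsometry.coe_toLinearIsometryEquiv]
  rw [show L1.extend f = L1 ⟨f, hf⟩ from this]
  exact (L0 ⟨f, hf⟩).2

/-! ### The determinant of the frame operator -/

/-- The determinant of the frame operator of an analytic family of vectors is analytic. The scalars
are real because the entries involve complex conjugation. -/
lemma analytic_det {ι κ : Type*} [Fintype ι] [DecidableEq ι] [Fintype κ]
    {E : Type*} [NormedAddCommGroup E] [NormedSpace ℝ E] (b : ι → H) (w : κ → E → H)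
    (hw : ∀ k x, AnalyticAt ℝ (w k) x) (x : E) :
    AnalyticAt ℝ (fun x => (Matrix.of fun i j => ∑ k, ⟪b i, w k x⟫ * ⟪w k x, b j⟫).det) x := by
  have h1 : ∀ i k, AnalyticAt ℝ (fun x => ⟪b i, w k x⟫) x := fun i k =>
    (((innerSL ℂ (b i)).restrictScalars ℝ).analyticAt _).comp (hw k x)
  have h2 : ∀ i k, AnalyticAt ℝ (fun x => ⟪w k x, b i⟫) x := fun i k => by
    have : (fun x => ⟪w k x, b i⟫) = fun x => Complex.conjCLE ⟪b i, w k x⟫ := by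
      ext x; simp
    rw [this]
    exact (Complex.conjCLE.toContinuousLinearMap.analyticAt _).comp (h1 i k)
  simp only [Matrix.det_apply', Matrix.of_apply]
  refine Finset.analyticAt_fun_sum _ fun σ _ => analyticAt_const.mul ?_
  refine Finset.analyticAt_fun_prod _ fun i _ => Finset.analyticAt_fun_sum _ fun k _ => ?_
  exact (h1 _ _).mul (h2 _ _)

/-- The matrix is that of the frame operator `f ↦ ∑ k, ⟪w k, f⟫ • w k` in the basis `b`; it is
singular exactly when some nonzero `f` is orthogonal to every `w k`. -/
lemma frameOperator_det_ne_zero_iff {ι κ : Type*} [Fintype ι] [DecidableEq ι] [Fintype κ]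
    (b : OrthonormalBasis ι ℂ H) (w : κ → H) :
    (Matrix.of fun i j => ∑ k, ⟪b i, w k⟫ * ⟪w k, b j⟫).det ≠ 0 ↔
      ∀ f, (∀ k, ⟪w k, f⟫ = 0) → f = 0 := by
  have key : ∀ a : ι → ℂ, ∀ i, (Matrix.of fun i j => ∑ k, ⟪b i, w k⟫ * ⟪w k, b j⟫).mulVec a i
      = ∑ k, ⟪b i, w k⟫ * ⟪w k, ∑ j, a j • b j⟫ := by
    intro a i
    simp only [Matrix.mulVec, dotProduct, Matrix.of_apply, inner_sum, inner_smul_right,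
      Finset.mul_sum, Finset.sum_mul]
    rw [Finset.sum_comm]
    exact Finset.sum_congr rfl fun _ _ => Finset.sum_congr rfl fun _ _ => by ring
  rw [ne_eq, ← Matrix.exists_mulVec_eq_zero_iff, not_exists]
  constructor
  · intro h f hf
    by_contra hf0
    refine h (fun j => b.repr f j) ⟨fun h0 => hf0 ?_, ?_⟩
    · rw [← b.sum_repr f]
      exact Finset.sum_eq_zero fun i _ => by
        rw [show b.repr f i = 0 from congrFun h0 i, zero_smul]
    · ext i
      rw [key, b.sum_repr f]
      simp [hf]
  · rintro h a ⟨ha, h0⟩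
    set f := ∑ j, a j • b j with hf
    have hsum : ∑ k, ⟪w k, f⟫ • w k = 0 := by
      refine b.repr.injective (PiLp.ext fun i => ?_)
      rw [b.repr_apply_apply, b.repr_apply_apply]
      have := congrFun h0 i
      rw [key, Pi.zero_apply] at this
      rw [inner_zero_right, ← this, inner_sum]
      exact Finset.sum_congr rfl fun k _ => by rw [inner_smul_right, mul_comm]
    have hz : ∑ k, ‖⟪w k, f⟫‖ ^ 2 = 0 := by
      have h3 := congrArg (fun x => ⟪f, x⟫) hsum
      simp only [inner_sum, inner_smul_right, inner_zero_right] at h3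
      have h4 : ∀ k, ⟪w k, f⟫ * ⟪f, w k⟫ = ((‖⟪w k, f⟫‖ ^ 2 : ℝ) : ℂ) := fun k => by
        rw [← inner_conj_symm f (w k), Complex.mul_conj, Complex.normSq_eq_norm_sq]
      simp only [h4] at h3
      exact_mod_cast h3
    have hf0 := h f fun k => by
      have := (Finset.sum_eq_zero_iff_of_nonneg (fun k _ => by positivity)).1 hz k
        (Finset.mem_univ _)
      simpa using this
    apply ha
    ext i
    have h5 : ⟪b i, f⟫ = a i := by rw [hf, b.orthonormal.inner_right_fintype]
    rw [← h5, hf0]; simp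

/-! ### The harmonic frame -/

lemma sum_pow_mul_conj_pow {n : ℕ} {ω : ℂ} (hω : IsPrimitiveRoot ω n) (hn : n ≠ 0) {k l : ℕ}
    (hk : k < n) (hl : l < n) :
    ∑ i : Fin n, (ω ^ (i : ℕ)) ^ k * (starRingEnd ℂ) ((ω ^ (i : ℕ)) ^ l) =
      if k = l then (n : ℂ) else 0 := by
  have hnorm : ‖ω‖ = 1 := hω.norm'_eq_one hn
  have hω0 : ω ≠ 0 := hω.ne_zero hn
  have hconj : (starRingEnd ℂ) ω = ω⁻¹ := (Complex.inv_eq_conj hnorm).symm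
  set r := ω ^ k * (ω⁻¹) ^ l with hr
  have hterm : ∀ i : ℕ, (ω ^ i) ^ k * (starRingEnd ℂ) ((ω ^ i) ^ l) = r ^ i := fun i => by
    rw [map_pow, map_pow, hconj, hr, mul_pow, ← pow_mul, ← pow_mul, ← pow_mul, ← pow_mul,
      mul_comm i k, mul_comm i l]
  rw [Fin.sum_univ_eq_sum_range (fun i => (ω ^ i) ^ k * (starRingEnd ℂ) ((ω ^ i) ^ l)) n]
  simp only [hterm]
  split_ifs with h
  · have : r = 1 := by rw [hr, h, ← mul_pow, mul_inv_cancel₀ hω0, one_pow]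
    simp [this]
  · have hr1 : r ≠ 1 := fun h1 => h <| hω.pow_inj hk hl <| by
      rw [hr, inv_pow, mul_inv_eq_one₀ (pow_ne_zero _ hω0)] at h1
      exact h1
    have hrn : r ^ n = 1 := by
      rw [hr, mul_pow, ← pow_mul, ← pow_mul, mul_comm k, mul_comm l, pow_mul, pow_mul, inv_pow,
        hω.pow_eq_one]
      simp
    rw [geom_sum_eq hr1, hrn]
    simp

/-- The harmonic frame: the `i`-th vector has coordinates `ω ^ (i k) / √n`, `k < m`, in the
orthonormal basis `b`. For `ω` a primitive `n`-th root of unity these are the columns of the first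
`m` rows of the unitary Fourier matrix. -/
def harmonicFrame {m : ℕ} (b : OrthonormalBasis (Fin m) ℂ H) (n : ℕ) (ω : ℂ) : Fin n → H :=
  fun i => ∑ k : Fin m, (((√n)⁻¹ : ℝ) * (ω ^ (i : ℕ)) ^ (k : ℕ)) • b k

lemma norm_harmonicFrame {m n : ℕ} (b : OrthonormalBasis (Fin m) ℂ H) {ω : ℂ}
    (hω : ‖ω‖ = 1) (i : Fin n) : ‖harmonicFrame b n ω i‖ = √(m / n) := by
  rw [← Real.sqrt_sq (norm_nonneg _), ← b.sum_sq_norm_inner_right]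
  simp_rw [harmonicFrame, b.orthonormal.inner_right_fintype]
  simp [hω, div_eq_mul_inv]

lemma parseval_harmonicFrame {m n : ℕ} (hn : n ≠ 0) (hmn : m ≤ n)
    (b : OrthonormalBasis (Fin m) ℂ H) {ω : ℂ} (hω : IsPrimitiveRoot ω n) (f : H) :
    ∑ i, ‖⟪f, harmonicFrame b n ω i⟫‖ ^ 2 = ‖f‖ ^ 2 := by
  rw [← b.sum_sq_norm_inner_left]
  have hin : ∀ i, ⟪f, harmonicFrame b n ω i⟫ =
      ∑ k : Fin m, (((√n)⁻¹ : ℝ) * (ω ^ (i : ℕ)) ^ (k : ℕ)) * ⟪f, b k⟫ := fun i => by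
    simp only [harmonicFrame, inner_sum, inner_smul_right]
  have hsq : ∀ z : ℂ, ((‖z‖ ^ 2 : ℝ) : ℂ) = z * (starRingEnd ℂ) z := fun z => by
    rw [Complex.mul_conj, Complex.normSq_eq_norm_sq]
  have hc : (((√n)⁻¹ : ℝ) : ℂ) * ((√n)⁻¹ : ℝ) * n = 1 := by
    norm_cast
    rw [← mul_inv, Real.mul_self_sqrt (Nat.cast_nonneg n)]
    field_simp
  rw [← Complex.ofReal_inj, Complex.ofReal_sum, Complex.ofReal_sum]
  simp only [hsq, hin, map_sum, Finset.sum_mul_sum]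
  rw [Finset.sum_comm]
  refine Finset.sum_congr rfl fun k _ => ?_
  rw [Finset.sum_comm]
  rw [Finset.sum_eq_single k]
  · have := sum_pow_mul_conj_pow hω hn (k.2.trans_le hmn) (k.2.trans_le hmn)
    rw [if_pos rfl] at this
    calc _ = ((((√n)⁻¹ : ℝ) : ℂ) * ((√n)⁻¹ : ℝ)) * (∑ i : Fin n, (ω ^ (i : ℕ)) ^ (k : ℕ) *
          (starRingEnd ℂ) ((ω ^ (i : ℕ)) ^ (k : ℕ))) * (⟪f, b k⟫ * (starRingEnd ℂ) ⟪f, b k⟫) := by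
          simp only [Finset.mul_sum, Finset.sum_mul, map_mul, Complex.conj_ofReal]
          exact Finset.sum_congr rfl fun _ _ => by ring
      _ = _ := by rw [this, hc, one_mul]
  · intro l _ hlk
    have := sum_pow_mul_conj_pow hω hn (k.2.trans_le hmn) (l.2.trans_le hmn)
    rw [if_neg (fun h => hlk (Fin.ext h.symm))] at this
    calc _ = ((((√n)⁻¹ : ℝ) : ℂ) * ((√n)⁻¹ : ℝ)) * (∑ i : Fin n, (ω ^ (i : ℕ)) ^ (k : ℕ) *
          (starRingEnd ℂ) ((ω ^ (i : ℕ)) ^ (l : ℕ))) * (⟪f, b k⟫ * (starRingEnd ℂ) ⟪f, b l⟫) := by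
          simp only [Finset.mul_sum, Finset.sum_mul, map_mul, Complex.conj_ofReal]
          exact Finset.sum_congr rfl fun _ _ => by ring
      _ = _ := by rw [this]; simp
  · simp

/-- Any `k` vectors of the harmonic frame span a space of dimension at least `min m k`: on
`d = min m k` of them, the first `d` coordinates form an invertible Vandermonde matrix. -/
lemma le_finrank_span_harmonicFrame [FiniteDimensional ℂ H] {m n : ℕ} (hn : n ≠ 0)
    (b : OrthonormalBasis (Fin m) ℂ H) {ω : ℂ} (hω : IsPrimitiveRoot ω n) (K : Finset (Fin n)) :
    min m K.card ≤ Module.finrank ℂ (Submodule.span ℂ (harmonicFrame b n ω '' K)) := by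
  obtain ⟨K', hK', hcard⟩ := Finset.exists_subset_card_eq (min_le_right m K.card)
  set d := min m K.card
  have hdm : d ≤ m := min_le_left _ _
  let e : Fin d ≃ K' := (K'.equivFinOfCardEq hcard).symm
  have hn0 : (((√n)⁻¹ : ℝ) : ℂ) ≠ 0 := by
    have : (0 : ℝ) < n := by positivity
    exact_mod_cast (inv_pos.2 (Real.sqrt_pos.2 this)).ne'
  have hli : LinearIndependent ℂ fun j => harmonicFrame b n ω (e j) := by
    rw [Fintype.linearIndependent_iff]
    intro a ha
    have hinj : Function.Injective fun j => ω ^ ((e j : Fin n) : ℕ) := fun i j hij =>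
      e.injective (Subtype.ext (Fin.ext (hω.pow_inj (e i : Fin n).2 (e j : Fin n).2 hij)))
    have := Matrix.eq_zero_of_forall_pow_sum_mul_pow_eq_zero hinj (v := a) fun k => by
      have h := congrArg (fun x => ⟪b (Fin.castLE hdm k), x⟫) ha
      rw [inner_sum, inner_zero_right] at h
      simp_rw [inner_smul_right, harmonicFrame, b.orthonormal.inner_right_fintype] at h
      refine (mul_eq_zero_iff_left hn0).1 ?_
      rw [← h, Finset.mul_sum]
      exact Finset.sum_congr rfl fun j _ => by rw [Fin.val_castLE]; ring
    exact fun i => congrFun this i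
  have hsub : Submodule.span ℂ (Set.range fun j => harmonicFrame b n ω (e j)) ≤
      Submodule.span ℂ (harmonicFrame b n ω '' K) := by
    refine Submodule.span_mono ?_
    rintro _ ⟨j, rfl⟩
    exact ⟨_, hK' (e j).2, rfl⟩
  calc d = Module.finrank ℂ (Submodule.span ℂ (Set.range fun j => harmonicFrame b n ω (e j))) := by
        rw [finrank_span_eq_card hli, Fintype.card_fin]
    _ ≤ _ := Submodule.finrank_mono hsub

/-! ### Weavings -/

lemma exists_lower_bound [FiniteDimensional ℂ H] {n : ℕ} (w : Fin n → H)
    (h : ∀ f, (∀ k, ⟪w k, f⟫ = 0) → f = 0) :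
    ∃ A : ℝ, 0 < A ∧ ∀ f : H, A * ‖f‖ ^ 2 ≤ ∑ i, ‖⟪f, w i⟫‖ ^ 2 := by
  let T : H →ₗ[ℂ] EuclideanSpace ℂ (Fin n) :=
    (WithLp.linearEquiv 2 ℂ (Fin n → ℂ)).symm.toLinearMap ∘ₗ
      LinearMap.pi fun i => (innerSL ℂ (w i)).toLinearMap
  have hT : ∀ f i, T f i = ⟪w i, f⟫ := fun f i => rfl
  have hker : LinearMap.ker T = ⊥ := by
    rw [LinearMap.ker_eq_bot']
    exact fun f hf => h f fun k => by rw [← hT, hf]; rfl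
  obtain ⟨K, hK, hanti⟩ := T.exists_antilipschitzWith hker
  refine ⟨((K : ℝ) ^ 2)⁻¹, by positivity, fun f => ?_⟩
  have h1 : ‖f‖ ≤ K * ‖T f‖ := by simpa using hanti.le_mul_dist f 0
  have h2 : ‖T f‖ ^ 2 = ∑ i, ‖⟪f, w i⟫‖ ^ 2 := by
    rw [EuclideanSpace.norm_sq_eq]
    exact Finset.sum_congr rfl fun i _ => by rw [hT, norm_inner_symm]
  have hK' : (0 : ℝ) < K := hK
  rw [← h2, inv_mul_le_iff₀ (by positivity), ← mul_pow]
  gcongr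

/-- For a single `J`, some rotation of the harmonic frame has a spanning weaving with `φ`. -/
lemma exists_unitary_weaving [FiniteDimensional ℂ H] {m n : ℕ} (hn : n ≠ 0)
    (hdim : Module.finrank ℂ H = m) (b : OrthonormalBasis (Fin m) ℂ H) {ω : ℂ}
    (hω : IsPrimitiveRoot ω n) (φ : Fin n → H)
    (hφ : ∀ f, (∀ i, ⟪φ i, f⟫ = 0) → f = 0) (J : Set (Fin n)) :
    ∃ u : unitary (H →L[ℂ] H), ∀ f, (∀ i ∈ J, ⟪φ i, f⟫ = 0) →
      (∀ i ∉ J, ⟪(u : H →L[ℂ] H) (harmonicFrame b n ω i), f⟫ = 0) → f = 0 := by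
  classical
  set V := (Submodule.span ℂ (φ '' J))ᗮ with hV
  let K : Finset (Fin n) := Finset.univ.filter (· ∉ J)
  set W := Submodule.span ℂ (harmonicFrame b n ω '' K) with hW
  have hVmem : ∀ f, f ∈ V ↔ ∀ i ∈ J, ⟪φ i, f⟫ = 0 := fun f => by
    rw [hV, Submodule.mem_orthogonal]
    refine ⟨fun h i hi => h _ (Submodule.subset_span ⟨i, hi, rfl⟩), fun h u hu => ?_⟩
    induction hu using Submodule.span_induction with
    | mem x hx => obtain ⟨i, hi, rfl⟩ := hx; exact h i hi
    | zero => simp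
    | add x y _ _ hx hy => rw [inner_add_left, hx, hy, add_zero]
    | smul a x _ hx => rw [inner_smul_left, hx, mul_zero]
  have hle1 : Module.finrank ℂ V ≤ K.card := by
    let T : V →ₗ[ℂ] (K → ℂ) :=
      LinearMap.pi fun i => (innerSL ℂ (φ i)).toLinearMap ∘ₗ V.subtype
    have hT : Function.Injective T := by
      rw [← LinearMap.ker_eq_bot, LinearMap.ker_eq_bot']
      intro f hf
      refine Subtype.ext (hφ f fun i => ?_)
      by_cases hi : i ∈ J
      · exact (hVmem f).1 f.2 i hi
      · exact congrFun hf ⟨i, by simp [K, hi]⟩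
    simpa using LinearMap.finrank_le_finrank_of_injective hT
  have hle : Module.finrank ℂ V ≤ Module.finrank ℂ W :=
    (le_min ((Submodule.finrank_le V).trans hdim.le) hle1).trans
      (le_finrank_span_harmonicFrame hn b hω K)
  obtain ⟨L, hL⟩ := exists_isometry V W hle
  refine ⟨Unitary.linearIsometryEquiv.symm L.symm, fun f h1 h2 => ?_⟩
  have hLf : L f ∈ W := hL f ((hVmem f).2 h1)
  have hperp : ∀ x ∈ W, ⟪x, L f⟫ = 0 := fun x hx => by
    induction hx using Submodule.span_induction with
    | mem x hx =>
      obtain ⟨i, hi, rfl⟩ := hx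
      have := h2 i (by simpa [K] using hi)
      rw [← L.inner_map_map] at this
      simpa using this
    | zero => simp
    | add x y _ _ hx hy => rw [inner_add_left, hx, hy, add_zero]
    | smul a x _ hx => rw [inner_smul_left, hx, mul_zero]
  simpa using hperp _ hLf

/-- If for each `J` some rotation `u η` has a spanning weaving with `φ` along `J`, then one rotation
works for all `J`: the good parameters `a` in `u = exp (i a)` form dense open sets. -/
lemma exists_common_unitary_weaving [FiniteDimensional ℂ H] {n : ℕ}
    (φ η : Fin n → H)
    (h : ∀ J : Set (Fin n), ∃ u : unitary (H →L[ℂ] H), ∀ f, (∀ i ∈ J, ⟪φ i, f⟫ = 0) →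
      (∀ i ∉ J, ⟪(u : H →L[ℂ] H) (η i), f⟫ = 0) → f = 0) :
    ∃ u : unitary (H →L[ℂ] H), ∀ J : Set (Fin n), ∀ f, (∀ i ∈ J, ⟪φ i, f⟫ = 0) →
      (∀ i ∉ J, ⟪(u : H →L[ℂ] H) (η i), f⟫ = 0) → f = 0 := by
  classical
  let E := selfAdjoint.submodule ℝ (H →L[ℂ] H)
  have : FiniteDimensional ℝ (H →L[ℂ] H) := FiniteDimensional.complexToReal _
  have : CompleteSpace E := FiniteDimensional.complete ℝ E
  let b := stdOrthonormalBasis ℂ H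
  let U : E → H →L[ℂ] H := fun a => NormedSpace.exp (Complex.I • (a : H →L[ℂ] H))
  let w : Set (Fin n) → Fin n → E → H := fun J k a => if k ∈ J then φ k else U a (η k)
  let g : Set (Fin n) → E → ℂ := fun J a =>
    (Matrix.of fun i j => ∑ k, ⟪b i, w J k a⟫ * ⟪w J k a, b j⟫).det
  have hU : ∀ a, AnalyticAt ℝ U a := fun a => by
    have h1 : AnalyticAt ℝ (NormedSpace.exp : (H →L[ℂ] H) → _) (Complex.I • (a : H →L[ℂ] H)) :=
      NormedSpace.exp_analytic _
    have h2 : AnalyticAt ℝ (fun a : E => Complex.I • (a : H →L[ℂ] H)) a :=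
      ((Complex.I • (ContinuousLinearMap.id ℝ (H →L[ℂ] H))).comp E.subtypeL).analyticAt a
    exact AnalyticAt.comp (g := NormedSpace.exp) (f := fun a : E => Complex.I • (a : H →L[ℂ] H)) h1 h2
  have hw : ∀ J k a, AnalyticAt ℝ (w J k) a := fun J k a => by
    by_cases hk : k ∈ J
    · simp only [w, hk, if_true]
      exact analyticAt_const
    · simp only [w, hk, if_false]
      exact (((ContinuousLinearMap.apply ℂ H (η k)).restrictScalars ℝ).analyticAt _).comp (hU a)
  have hg : ∀ J, AnalyticOnNhd ℝ (g J) Set.univ := fun J a _ => analytic_det _ _ (hw J) a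
  have hgood : ∀ J a, g J a ≠ 0 ↔ ∀ f, (∀ i ∈ J, ⟪φ i, f⟫ = 0) →
      (∀ i ∉ J, ⟪U a (η i), f⟫ = 0) → f = 0 := fun J a => by
    refine (frameOperator_det_ne_zero_iff b fun k => w J k a).trans (forall_congr' fun f => ?_)
    constructor
    · intro hf h1 h2
      refine hf fun k => ?_
      by_cases hk : k ∈ J
      · simpa [w, hk] using h1 k hk
      · simpa [w, hk] using h2 k hk
    · intro hf h1
      exact hf (fun i hi => by simpa [w, hi] using h1 i) (fun i hi => by simpa [w, hi] using h1 i)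
  have hopen : ∀ J, IsOpen {a | g J a ≠ 0} := fun J =>
    isOpen_ne_fun (continuous_iff_continuousAt.2 fun a => (hg J a trivial).continuousAt)
      continuous_const
  have hdense : ∀ J, Dense {a | g J a ≠ 0} := fun J => by
    obtain ⟨u, hu⟩ := h J
    obtain ⟨z, a, hz, ha⟩ := exists_unitary_smul_eq_exp u
    have hga : g J a ≠ 0 := (hgood J a).2 fun f h1 h2 => hu f h1 fun i hi => by
      have := h2 i hi
      simp only [U] at this
      rw [ha, smul_apply, inner_smul_left] at this
      exact (mul_eq_zero.1 this).resolve_left (by simpa using hz)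
    rw [← Set.compl_ofPred, ← interior_eq_empty_iff_dense_compl, Set.eq_empty_iff_forall_notMem]
    -- Vanishing near one point would force `g J` to vanish identically.
    intro x hx
    have h0 : g J =ᶠ[nhds x] 0 := mem_interior_iff_mem_nhds.1 hx
    exact hga (congrFun ((hg J).eq_of_eventuallyEq (fun _ _ => analyticAt_const) h0) a)
  obtain ⟨a, ha⟩ := (dense_iInter_of_isOpen hopen hdense).nonempty
  refine ⟨selfAdjoint.expUnitary a, fun J => (hgood J a).1 (Set.mem_iInter.1 ha J)⟩

/-- Let `m, n` be relatively prime, and let `φ` be an `ε`-nearly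
equal-norm, `ε`-nearly Parseval frame of `n` vectors for an `m`-dimensional Hilbert
space `H`, with lower frame bound `Aφ`, where
`0 < ε < min (1/2) (8 α √Aφ / (4 √m + 27 m² n (n-1)⁸))` for some `α < 1`.
Then there exists an equal-norm Parseval frame `ψ` such that `φ` and `ψ` are woven. -/
theorem exists_equalNorm_parseval_woven [FiniteDimensional ℂ H]
    (m n : ℕ) (hdim : Module.finrank ℂ H = m) (hmn : Nat.Coprime m n)
    (φ : Fin n → H) (Aφ : ℝ) (hAφ : 0 < Aφ)
    (hlow : ∀ f : H, Aφ * ‖f‖ ^ 2 ≤ ∑ i, ‖⟪f, φ i⟫‖ ^ 2)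
    (ε : ℝ) (α : ℝ) (hα : α < 1)
    (hε : 0 < ε ∧ ε < min (1 / 2)
      (8 * α * Real.sqrt Aφ /
        (4 * Real.sqrt m + 27 * (m : ℝ) ^ 2 * n * ((n : ℝ) - 1) ^ 8)))
    (hnearNorm : ∃ c : ℝ, 0 < c ∧ ∀ i : Fin n,
      (1 - ε) * c ≤ ‖φ i‖ ∧ ‖φ i‖ ≤ (1 + ε) * c)
    (hnearParseval : ∀ f : H,
      (1 - ε) * ‖f‖ ^ 2 ≤ ∑ i, ‖⟪f, φ i⟫‖ ^ 2 ∧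
      ∑ i, ‖⟪f, φ i⟫‖ ^ 2 ≤ (1 + ε) * ‖f‖ ^ 2) :
    ∃ ψ : Fin n → H,
      (∃ c : ℝ, 0 < c ∧ ∀ i : Fin n, ‖ψ i‖ = c) ∧
      IsFrameWith ψ 1 1 ∧
      Woven φ ψ := by
  have hφ : ∀ f, (∀ i, ⟪φ i, f⟫ = 0) → f = 0 := fun f hf => by
    have h1 := hlow f
    simp only [fun i => (norm_inner_symm f (φ i)).trans (by rw [hf i, norm_zero] : _ = (0 : ℝ)),
      ne_eq, OfNat.ofNat_ne_zero, not_false_eq_true, zero_pow, Finset.sum_const_zero] at h1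
    have h2 : ‖f‖ ^ 2 ≤ 0 := nonpos_of_mul_nonpos_right h1 hAφ
    simpa using le_antisymm h2 (by positivity)
  -- If `m = 0` then `n = 1`, and the zero vector cannot have norm at least `(1 - ε) c > 0`.
  have hm : m ≠ 0 := by
    rintro rfl
    obtain rfl : n = 1 := by simpa using hmn
    have : Subsingleton H := Module.finrank_zero_iff.1 hdim
    obtain ⟨c, hc, hc'⟩ := hnearNorm
    have h1 := (hc' 0).1
    rw [Subsingleton.elim (φ 0) 0, norm_zero] at h1
    have h2 := hε.2.trans_le (min_le_left _ _)
    nlinarith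
  have hmn' : m ≤ n := by
    let T : H →ₗ[ℂ] (Fin n → ℂ) := LinearMap.pi fun i => (innerSL ℂ (φ i)).toLinearMap
    have hT : Function.Injective T := by
      rw [← LinearMap.ker_eq_bot, LinearMap.ker_eq_bot']
      exact fun f hf => hφ f fun i => congrFun hf i
    simpa [hdim] using LinearMap.finrank_le_finrank_of_injective hT
  have hn : n ≠ 0 := by omega
  let b : OrthonormalBasis (Fin m) ℂ H :=
    (stdOrthonormalBasis ℂ H).reindex (finCongr hdim)
  have hω := Complex.isPrimitiveRoot_exp n hn
  set ω := Complex.exp (2 * Real.pi * Complex.I / n)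
  obtain ⟨u, hu⟩ := exists_common_unitary_weaving φ (harmonicFrame b n ω)
    (exists_unitary_weaving hn hdim b hω φ hφ)
  let L := Unitary.linearIsometryEquiv u
  have hL : ∀ x, L x = (u : H →L[ℂ] H) x := fun x => rfl
  let ψ : Fin n → H := fun i => L (harmonicFrame b n ω i)
  refine ⟨ψ, ⟨√(m / n), by positivity, fun i => ?_⟩, ⟨one_pos, le_rfl, fun f => ?_⟩, ?_⟩
  · rw [L.norm_map, norm_harmonicFrame b (hω.norm'_eq_one hn)]
  · have hpar : ∑ i, ‖⟪f, ψ i⟫‖ ^ 2 = ‖f‖ ^ 2 := by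
      rw [← L.symm.norm_map f, ← parseval_harmonicFrame hn hmn' b hω]
      refine Finset.sum_congr rfl fun i _ => ?_
      rw [← L.inner_map_map (L.symm f), L.apply_symm_apply]
    rw [tsum_fintype, hpar, one_mul]
    exact ⟨(hasSum_fintype _).summable, le_rfl, le_rfl⟩
  · have hlb : ∀ J : Set (Fin n), ∃ A : ℝ, 0 < A ∧
        ∀ f : H, A * ‖f‖ ^ 2 ≤ ∑ i, ‖⟪f, weaving φ ψ J i⟫‖ ^ 2 := fun J => by
      refine exists_lower_bound _ fun f hf => hu J f (fun i hi => ?_) fun i hi => ?_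
      · simpa [weaving, hi] using hf i
      · simpa [weaving, hi, ψ, hL] using hf i
    choose A hA hAf using hlb
    obtain ⟨J₀, hJ₀⟩ := Finite.exists_min A
    set B := ∑ i, (‖φ i‖ ^ 2 + ‖ψ i‖ ^ 2) with hB
    refine ⟨A J₀, max (A J₀) B, fun J => ⟨hA J₀, le_max_left _ _, fun f => ?_⟩⟩
    rw [tsum_fintype]
    refine ⟨(hasSum_fintype _).summable, le_trans ?_ (hAf J f), ?_⟩
    · gcongr
      exact hJ₀ J
    · calc ∑ i, ‖⟪f, weaving φ ψ J i⟫‖ ^ 2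
          ≤ ∑ i, (‖φ i‖ ^ 2 + ‖ψ i‖ ^ 2) * ‖f‖ ^ 2 := by
            refine Finset.sum_le_sum fun i _ => ?_
            have h1 : ‖⟪f, weaving φ ψ J i⟫‖ ^ 2 ≤ (‖f‖ * ‖weaving φ ψ J i‖) ^ 2 := by
              gcongr
              exact norm_inner_le_norm _ _
            have h2 : ‖weaving φ ψ J i‖ ^ 2 ≤ ‖φ i‖ ^ 2 + ‖ψ i‖ ^ 2 := by
              by_cases hi : i ∈ J
              · simp only [weaving, hi, if_true]
                linarith [sq_nonneg ‖ψ i‖]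
              · simp only [weaving, hi, if_false]
                linarith [sq_nonneg ‖φ i‖]
            rw [mul_pow, mul_comm] at h1
            exact h1.trans (by gcongr)
        _ = B * ‖f‖ ^ 2 := by rw [hB, Finset.sum_mul]
        _ ≤ max (A J₀) B * ‖f‖ ^ 2 := by
            gcongr
            exact le_max_right _ _
end
end
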